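/- Fix x, t ∈ ℝ and let (Ω₁, …, Ω_g) be the unique solution of the moment system Σ_{j=1}^{g} Ω_j ∫_{β_j}^{α_{j+1}} ζ^{k−1}/R(ζ) dζ = Σ_{j=1}^{g} ∫_{β_j}^{α_{j+1}} 2θ⁺(ζ; x, t) ζ^{k−1}/R(ζ) dζ (k = 1, …, g). Then the function G(λ) = (R(λ)/(2πi)) Σ_{j=1}^{g} ∫_{β_j}^{α_{j+1}} (Ω_j − 2θ⁺(ζ; x, t)) / ( R(ζ)(ζ − λ) ) dζ satisfies G(λ) = O(|λ|^{−1/2}) as λ → ∞ in ℂ∖[0, ∞); in particular G(λ) → 0 as λ → ∞. -/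

import Mathlib

open Complex Filter

/-!
Expanding `1 / (ζ - λ)` in powers of `1 / λ` turns a Cauchy integral into a series whose
coefficients are the moments of its density. The moment system says that the density
`(Ω_j - 2θ⁺) / R` has vanishing moments of orders `0, …, g - 1`, so the sum of the Cauchy integrals
over the gaps is `O(|λ|^{-(g + 1)})`. Since `R² = P` has degree `2g + 1`, the prefactor `R` is
`O(|λ|^{g + 1/2})`, and the product is `O(|λ|^{-1/2})`. The integrals converge because `1 / R` has
only inverse square root singularities at the ends of each gap, and `1 / √((y - b)(c - y))` is
integrable on `(b, c)`, being the derivative of the bounded monotone function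
`arcsin ((2y - b - c) / (c - b))`.
-/

section CauchyIntegralAtInfinity

open MeasureTheory Asymptotics Bornology

theorem exists_norm_le_mul_rpow_of_isBigO {E F : Type*} [SeminormedAddCommGroup E]
    [Norm F] {f : E → F} {S : Set E} {r : ℝ} (hf : f =O[cobounded E ⊓ 𝓟 S] fun z ↦ ‖z‖ ^ r) :
    ∃ C > 0, ∃ M, ∀ z ∈ S, M ≤ ‖z‖ → ‖f z‖ ≤ C * ‖z‖ ^ r := by
  obtain ⟨C, hC, hbound⟩ := hf.exists_pos
  obtain ⟨M, -, hM⟩ :=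
    (atTop_basis.cobounded_of_norm.inf_principal S).eventually_iff.1 hbound.bound
  refine ⟨C, hC, M, fun z hz hMz ↦ (hM ⟨hMz, hz⟩).trans_eq ?_⟩
  rw [Real.norm_of_nonneg (Real.rpow_nonneg (norm_nonneg z) r)]

theorem inv_sub_eq_sub_sum_range {K : Type*} [Field K] {w z : K} (hz : z ≠ 0) (hwz : w - z ≠ 0)
    (n : ℕ) :
    (w - z)⁻¹ = (z ^ n)⁻¹ * (w ^ n / (w - z)) - ∑ k ∈ Finset.range n, (z ^ (k + 1))⁻¹ * w ^ k := by
  induction n with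
  | zero => simp
  | succ n ih =>
    rw [Finset.sum_range_succ, ih]
    field_simp
    ring

theorem norm_inv_sub_le {K : Type*} [NormedField K] {w z : K} (h : 2 * ‖w‖ ≤ ‖z‖) :
    ‖(w - z)⁻¹‖ ≤ 2 * ‖z‖⁻¹ := by
  rcases eq_or_ne z 0 with rfl | hz
  · have hw : w = 0 := norm_le_zero_iff.1 (by rw [norm_zero] at h; linarith)
    simp [hw]
  · have hz' : 0 < ‖z‖ := norm_pos_iff.2 hz
    have hle : ‖z‖ / 2 ≤ ‖w - z‖ := by
      linarith [norm_sub_norm_le z w, norm_sub_rev z w]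
    calc ‖(w - z)⁻¹‖ = ‖w - z‖⁻¹ := norm_inv _
      _ ≤ (‖z‖ / 2)⁻¹ := inv_anti₀ (half_pos hz') hle
      _ = 2 * ‖z‖⁻¹ := by rw [inv_div, div_eq_mul_inv]

variable {𝕜 α ι : Type*} [RCLike 𝕜] [MeasurableSpace α] {μ : Measure α} {s h : α → 𝕜} {A : ℝ}

theorem integrable_pow_mul (hs : AEStronglyMeasurable s μ) (hA : ∀ᵐ x ∂μ, ‖s x‖ ≤ A)
    (hh : Integrable h μ) (n : ℕ) : Integrable (fun x ↦ s x ^ n * h x) μ :=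
  hh.bdd_mul (c := A ^ n) (hs.pow n) <| hA.mono fun x hx ↦ by
    rw [norm_pow]; gcongr

theorem integrable_div_sub (hs : AEStronglyMeasurable s μ) (hA : ∀ᵐ x ∂μ, ‖s x‖ ≤ A)
    (hh : Integrable h μ) {z : 𝕜} (hz : 2 * A ≤ ‖z‖) :
    Integrable (fun x ↦ h x / (s x - z)) μ := by
  simp only [div_eq_mul_inv]
  refine hh.mul_bdd (c := 2 * ‖z‖⁻¹) (hs.sub aestronglyMeasurable_const).inv₀
    (hA.mono fun x hx ↦ ?_)
  exact norm_inv_sub_le (by linarith)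

theorem isBigO_integral_div_sub (hA : ∀ᵐ x ∂μ, ‖s x‖ ≤ A) (hh : Integrable h μ) :
    (fun z ↦ ∫ x, h x / (s x - z) ∂μ) =O[cobounded 𝕜] fun z ↦ z⁻¹ := by
  refine .of_bound (2 * ∫ x, ‖h x‖ ∂μ) ?_
  filter_upwards [eventually_cobounded_le_norm (2 * A)] with z hz
  calc ‖∫ x, h x / (s x - z) ∂μ‖ ≤ ∫ x, 2 * ‖z‖⁻¹ * ‖h x‖ ∂μ := by
        refine norm_integral_le_of_norm_le (hh.norm.const_mul _) (hA.mono fun x hx ↦ ?_)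
        rw [div_eq_inv_mul, norm_mul]
        gcongr
        exact norm_inv_sub_le (by linarith)
    _ = 2 * (∫ x, ‖h x‖ ∂μ) * ‖z⁻¹‖ := by rw [integral_const_mul, norm_inv]; ring

theorem integral_div_sub_eq_sub_sum_range (hs : AEStronglyMeasurable s μ)
    (hA : ∀ᵐ x ∂μ, ‖s x‖ ≤ A) (hh : Integrable h μ) {z : 𝕜} (hz0 : z ≠ 0) (hz : 2 * A ≤ ‖z‖)
    (n : ℕ) :
    ∫ x, h x / (s x - z) ∂μ = (z ^ n)⁻¹ * ∫ x, s x ^ n * h x / (s x - z) ∂μ -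
      ∑ k ∈ Finset.range n, (z ^ (k + 1))⁻¹ * ∫ x, s x ^ k * h x ∂μ := by
  have hpow := integrable_pow_mul hs hA hh
  simp_rw [← integral_const_mul]
  rw [← integral_finsetSum _ fun k _ ↦ (hpow k).const_mul _,
    ← integral_sub ((integrable_div_sub hs hA (hpow n) hz).const_mul _)
      (integrable_finsetSum _ fun k _ ↦ (hpow k).const_mul _)]
  refine integral_congr_ae (hA.mono fun x hx ↦ ?_)
  have hne : s x - z ≠ 0 := fun h0 ↦ by
    have := norm_pos_iff.2 hz0
    rw [sub_eq_zero.1 h0] at hx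
    linarith
  simp only [div_eq_mul_inv (h x), inv_sub_eq_sub_sum_range hz0 hne n, mul_sub, Finset.mul_sum]
  congr 1
  · ring
  · exact Finset.sum_congr rfl fun k _ ↦ by ring

theorem isBigO_sum_integral_div_sub_of_moments_eq_zero {S : Finset ι} {μ : ι → Measure α}
    {s h : ι → α → 𝕜} {A : ι → ℝ} {n : ℕ} (hs : ∀ i ∈ S, AEStronglyMeasurable (s i) (μ i))
    (hA : ∀ i ∈ S, ∀ᵐ x ∂μ i, ‖s i x‖ ≤ A i) (hh : ∀ i ∈ S, Integrable (h i) (μ i))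
    (hmom : ∀ k < n, ∑ i ∈ S, ∫ x, s i x ^ k * h i x ∂μ i = 0) :
    (fun z ↦ ∑ i ∈ S, ∫ x, h i x / (s i x - z) ∂μ i) =O[cobounded 𝕜] fun z ↦ (z ^ (n + 1))⁻¹ := by
  have hrem : (fun z ↦ (z ^ n)⁻¹ * ∑ i ∈ S, ∫ x, s i x ^ n * h i x / (s i x - z) ∂μ i)
      =O[cobounded 𝕜] fun z ↦ (z ^ n)⁻¹ * z⁻¹ :=
    (isBigO_refl _ _).mul <| .fun_sum fun i hi ↦
      isBigO_integral_div_sub (hA i hi) (integrable_pow_mul (hs i hi) (hA i hi) (hh i hi) n)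
  refine hrem.congr' ?_ (.of_forall fun z ↦ by simp only [pow_succ, mul_inv])
  have hlarge : ∀ᶠ z in cobounded 𝕜, ∀ i ∈ S, 2 * A i ≤ ‖z‖ :=
    (eventually_all_finset S).2 fun i _ ↦ eventually_cobounded_le_norm _
  filter_upwards [hlarge, eventually_ne_cobounded 0] with z hz hz0
  calc (z ^ n)⁻¹ * ∑ i ∈ S, ∫ x, s i x ^ n * h i x / (s i x - z) ∂μ i
      = (z ^ n)⁻¹ * ∑ i ∈ S, ∫ x, s i x ^ n * h i x / (s i x - z) ∂μ i -
          ∑ k ∈ Finset.range n, (z ^ (k + 1))⁻¹ * ∑ i ∈ S, ∫ x, s i x ^ k * h i x ∂μ i := by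
        rw [Finset.sum_eq_zero (s := Finset.range n) fun k hk ↦ by
          rw [hmom k (Finset.mem_range.1 hk), mul_zero], sub_zero]
    _ = ∑ i ∈ S, ∫ x, h i x / (s i x - z) ∂μ i := by
        simp only [Finset.mul_sum]
        rw [Finset.sum_comm, ← Finset.sum_sub_distrib]
        exact Finset.sum_congr rfl fun i hi ↦
          (integral_div_sub_eq_sub_sum_range (hs i hi) (hA i hi) (hh i hi) hz0 (hz i hi) n).symm

end CauchyIntegralAtInfinity

section InverseSquareRoot

open MeasureTheory Set

theorem hasDerivAt_arcsin_affine {b c y : ℝ} (hy : y ∈ Ioo b c) :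
    HasDerivAt (fun y ↦ Real.arcsin ((2 * y - b - c) / (c - b))) (√((y - b) * (c - y)))⁻¹ y := by
  have hbc : 0 < c - b := by linarith [hy.1, hy.2]
  have hlin : HasDerivAt (fun y : ℝ ↦ (2 * y - b - c) / (c - b)) (2 / (c - b)) y := by
    simpa using ((((hasDerivAt_id y).const_mul 2).sub_const b).sub_const c).div_const (c - b)
  have hlt : -1 < (2 * y - b - c) / (c - b) := by rw [lt_div_iff₀ hbc]; linarith [hy.1]
  have hgt : (2 * y - b - c) / (c - b) < 1 := by rw [div_lt_iff₀ hbc]; linarith [hy.2]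
  refine ((Real.hasDerivAt_arcsin hlt.ne' hgt.ne).comp y hlin).congr_deriv ?_
  have hsq : 1 - ((2 * y - b - c) / (c - b)) ^ 2 = (2 / (c - b)) ^ 2 * ((y - b) * (c - y)) := by
    field_simp
    ring
  rw [hsq, Real.sqrt_mul (sq_nonneg _), Real.sqrt_sq (by positivity)]
  field_simp

theorem intervalIntegrable_inv_sqrt_mul (b c : ℝ) :
    IntervalIntegrable (fun y ↦ (√((y - b) * (c - y)))⁻¹) volume b c := by
  wlog hbc : b ≤ c generalizing b c
  · refine ((this c b (le_of_not_ge hbc)).symm).congr ?_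
    exact fun y _ ↦ by ring_nf
  refine intervalIntegral.intervalIntegrable_deriv_of_nonneg
    (g := fun y ↦ Real.arcsin ((2 * y - b - c) / (c - b))) ?_ ?_ fun _ _ ↦ by positivity
  · exact (Real.continuous_arcsin.comp (by fun_prop)).continuousOn
  · rw [min_eq_left hbc, max_eq_right hbc]
    exact fun y hy ↦ hasDerivAt_arcsin_affine hy

theorem intervalIntegrable_inv_of_norm_sq_eq {𝕜 : Type*} [NormedField 𝕜] {b c : ℝ} (hbc : b ≤ c)
    {f : ℝ → 𝕜} {q : ℝ → ℝ} (hf : ContinuousOn f (Ioo b c)) (hq : ContinuousOn q (Icc b c))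
    (hq_pos : ∀ y ∈ Icc b c, 0 < q y)
    (hfq : ∀ y ∈ Ioo b c, ‖f y‖ ^ 2 = (y - b) * (c - y) * q y) :
    IntervalIntegrable (fun y ↦ (f y)⁻¹) volume b c := by
  have hdom : IntervalIntegrable (fun y ↦ (√((y - b) * (c - y)))⁻¹ * (√(q y))⁻¹) volume b c := by
    refine (intervalIntegrable_inv_sqrt_mul b c).mul_continuousOn ?_
    rw [uIcc_of_le hbc]
    exact hq.sqrt.inv₀ fun y hy ↦ (Real.sqrt_pos.2 (hq_pos y hy)).ne'
  have hnorm : ∀ y ∈ Ioo b c, ‖f y‖ = √((y - b) * (c - y)) * √(q y) := fun y hy ↦ by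
    have hnonneg : 0 ≤ (y - b) * (c - y) :=
      mul_nonneg (sub_nonneg.2 hy.1.le) (sub_nonneg.2 hy.2.le)
    rw [← Real.sqrt_mul hnonneg, ← hfq y hy, Real.sqrt_sq (norm_nonneg _)]
  have hf_ne : ∀ y ∈ Ioo b c, f y ≠ 0 := fun y hy ↦ by
    rw [← norm_ne_zero_iff, hnorm y hy]
    have := mul_pos (sub_pos.2 hy.1) (sub_pos.2 hy.2)
    have := hq_pos y (Ioo_subset_Icc_self hy)
    positivity
  rw [intervalIntegrable_iff_integrableOn_Ioo_of_le hbc] at hdom ⊢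
  refine hdom.mono' ((hf.inv₀ hf_ne).aestronglyMeasurable measurableSet_Ioo) ?_
  refine ae_restrict_of_forall_mem measurableSet_Ioo fun y hy ↦ ?_
  rw [norm_inv, hnorm y hy, mul_inv]

end InverseSquareRoot

section Bands

open MeasureTheory Asymptotics Bornology Set Topology

/-- The ordering `a 1 < b 1 < a 2 < ⋯ < b g < a (g + 1)` of the band edges; only the values
`a 1, …, a (g + 1)` and `b 1, …, b g` of the two sequences are meaningful. -/
def IsInterlaced (g : ℕ) (a b : ℕ → ℝ) : Prop :=
  ∀ j ∈ Finset.Icc 1 g, a j < b j ∧ b j < a (j + 1)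

/-- The complement in `ℂ` of the bands `[a 1, b 1], …, [a g, b g], [a (g + 1), ∞)`. -/
def bandComplement (g : ℕ) (a b : ℕ → ℝ) : Set ℂ :=
  {z | ¬(z.im = 0 ∧ z.re ∈ Ici (a (g + 1)) ∪ ⋃ j ∈ Finset.Icc 1 g, Icc (a j) (b j))}

/-- The polynomial `P` of degree `2 * g + 1` vanishing exactly at the band edges. -/
def bandPolynomial (g : ℕ) (a b : ℕ → ℝ) (z : ℂ) : ℂ :=
  (z - a (g + 1)) * ∏ j ∈ Finset.Icc 1 g, ((z - a j) * (z - b j))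

/-- The factor of `bandPolynomial` that is left when the two zeros at the endpoints of the gap
`(b j, a (j + 1))` are removed. -/
def gapCofactor (g : ℕ) (a b : ℕ → ℝ) (j : ℕ) (z : ℂ) : ℂ :=
  (z - a 1) * ∏ i ∈ (Finset.Icc 1 g).erase j, ((z - b i) * (z - a (i + 1)))

/-- The function `G` obtained by multiplying `R / (2πi)` with the sum of the Cauchy integrals of
`φ j / R` over the gaps `(b j, a (j + 1))`. -/
noncomputable def gapCauchyTransform (g : ℕ) (a b : ℕ → ℝ) (R : ℂ → ℂ) (φ : ℕ → ℝ → ℂ) (z : ℂ) :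
    ℂ :=
  R z / (2 * Real.pi * I) *
    ∑ j ∈ Finset.Icc 1 g, ∫ ζ in (b j)..(a (j + 1)), φ j ζ / (R ζ * (ζ - z))

variable {g : ℕ} {a b : ℕ → ℝ}

theorem IsInterlaced.strictMonoOn_left (hab : IsInterlaced g a b) :
    StrictMonoOn a (Icc 1 (g + 1)) :=
  strictMonoOn_of_lt_add_one ordConnected_Icc fun j _ hj hj' ↦
    have h := hab j (Finset.mem_Icc.2 ⟨hj.1, by grind⟩)
    h.1.trans h.2

theorem IsInterlaced.strictMonoOn_right (hab : IsInterlaced g a b) :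
    StrictMonoOn b (Icc 1 g) :=
  strictMonoOn_of_lt_add_one ordConnected_Icc fun j _ hj hj' ↦
    (hab j (Finset.mem_Icc.2 hj)).2.trans (hab (j + 1) (Finset.mem_Icc.2 hj')).1

theorem IsInterlaced.mapsTo_gap_bandComplement (hab : IsInterlaced g a b) {j : ℕ}
    (hj : j ∈ Finset.Icc 1 g) :
    MapsTo ((↑) : ℝ → ℂ) (Ioo (b j) (a (j + 1))) (bandComplement g a b) := by
  rintro y ⟨hby, hya⟩ ⟨-, hy⟩
  have ha := hab.strictMonoOn_left.monotoneOn
  have hb := hab.strictMonoOn_right.monotoneOn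
  obtain ⟨hj1, hjg⟩ := Finset.mem_Icc.1 hj
  simp only [ofReal_re, mem_union, mem_Ici, mem_iUnion, Finset.mem_Icc] at hy
  rcases hy with hy | ⟨i, ⟨hi1, hig⟩, hay, hyb⟩
  · have : a (j + 1) ≤ a (g + 1) := ha (by grind) (by grind) (by lia)
    linarith
  · rcases le_or_gt i j with hij | hji
    · have : b i ≤ b j := hb ⟨hi1, hig⟩ ⟨hj1, hjg⟩ hij
      linarith
    · have : a (j + 1) ≤ a i := ha (by grind) (by grind) hji
      linarith

theorem IsInterlaced.compl_Ici_subset_bandComplement (hab : IsInterlaced g a b) :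
    {z : ℂ | ¬(z.im = 0 ∧ a 1 ≤ z.re)} ⊆ bandComplement g a b := by
  rintro z hz ⟨him, hre⟩
  refine hz ⟨him, ?_⟩
  have ha : ∀ i ∈ Icc 1 (g + 1), a 1 ≤ a i := fun i hi ↦
    hab.strictMonoOn_left.monotoneOn (by simp) hi hi.1
  simp only [mem_union, mem_Ici, mem_iUnion, Finset.mem_Icc] at hre
  rcases hre with hre | ⟨i, ⟨hi1, hig⟩, hai, -⟩
  · exact (ha _ (by simp)).trans hre
  · exact (ha i ⟨hi1, by lia⟩).trans hai

theorem bandPolynomial_eq_mul_prod_gaps (g : ℕ) (a b : ℕ → ℝ) (z : ℂ) :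
    bandPolynomial g a b z =
      (z - a 1) * ∏ j ∈ Finset.Icc 1 g, ((z - b j) * (z - a (j + 1))) := by
  induction g with
  | zero => simp [bandPolynomial]
  | succ n ih =>
    unfold bandPolynomial at ih ⊢
    rw [Finset.prod_Icc_succ_top (by lia), Finset.prod_Icc_succ_top (by lia),
      ← mul_assoc (z - a 1), ← ih]
    ring

theorem bandPolynomial_eq_mul_gapCofactor {j : ℕ} (hj : j ∈ Finset.Icc 1 g) (z : ℂ) :
    bandPolynomial g a b z = (z - b j) * (z - a (j + 1)) * gapCofactor g a b j z := by
  rw [bandPolynomial_eq_mul_prod_gaps, ← Finset.mul_prod_erase _ _ hj, gapCofactor]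
  ring

theorem IsInterlaced.gapCofactor_ne_zero (hab : IsInterlaced g a b) {j : ℕ}
    (hj : j ∈ Finset.Icc 1 g) {y : ℝ} (hy : y ∈ Icc (b j) (a (j + 1))) :
    gapCofactor g a b j y ≠ 0 := by
  have ha := hab.strictMonoOn_left.monotoneOn
  have sub_ne : ∀ {r : ℝ}, y ≠ r → (y : ℂ) - r ≠ 0 := fun h ↦ by
    rwa [sub_ne_zero, Ne, ofReal_inj]
  obtain ⟨hj1, hjg⟩ := Finset.mem_Icc.1 hj
  obtain ⟨hajbj, -⟩ := hab j hj
  refine mul_ne_zero (sub_ne ?_) (Finset.prod_ne_zero_iff.2 fun i hi ↦ ?_)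
  · have : a 1 ≤ a j := ha (by simp) (by grind) hj1
    exact (by linarith [hy.1] : a 1 < y).ne'
  · obtain ⟨hij, hi⟩ := Finset.mem_erase.1 hi
    obtain ⟨hi1, hig⟩ := Finset.mem_Icc.1 hi
    obtain ⟨haibi, hbiai⟩ := hab i hi
    rcases hij.lt_or_gt with hij | hji
    · have : a (i + 1) ≤ a j := ha (by grind) (by grind) hij
      have hlt : a (i + 1) < y := by linarith [hy.1]
      exact mul_ne_zero (sub_ne (hbiai.trans hlt).ne') (sub_ne hlt.ne')
    · have : a (j + 1) ≤ a i := ha (by grind) (by grind) hji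
      have hlt : y < b i := by linarith [hy.2]
      exact mul_ne_zero (sub_ne hlt.ne) (sub_ne (hlt.trans hbiai).ne)

theorem isBigO_bandPolynomial_cobounded (g : ℕ) (a b : ℕ → ℝ) :
    bandPolynomial g a b =O[cobounded ℂ] fun z ↦ z ^ (2 * g + 1) := by
  have hfac (r : ℝ) : (fun z : ℂ ↦ z - r) =O[cobounded ℂ] id :=
    (isBigO_refl id _).sub (isLittleO_const_id_cobounded _).isBigO
  refine ((hfac (a (g + 1))).mul <| IsBigO.finsetProd fun j (_ : j ∈ Finset.Icc 1 g) ↦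
    (hfac (a j)).mul (hfac (b j))).congr_right fun z ↦ ?_
  simp only [id, Finset.prod_const, Nat.card_Icc, Nat.add_sub_cancel]
  ring

variable {R : ℂ → ℂ}

theorem IsInterlaced.intervalIntegrable_inv_of_sq_eq_bandPolynomial (hab : IsInterlaced g a b)
    (hR : ContinuousOn R (bandComplement g a b))
    (hRsq : ∀ z ∈ bandComplement g a b, R z ^ 2 = bandPolynomial g a b z) {j : ℕ}
    (hj : j ∈ Finset.Icc 1 g) :
    IntervalIntegrable (fun ζ : ℝ ↦ (R ζ)⁻¹) volume (b j) (a (j + 1)) := by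
  have hgap := hab.mapsTo_gap_bandComplement hj
  refine intervalIntegrable_inv_of_norm_sq_eq (hab j hj).2.le
    (q := fun y ↦ ‖gapCofactor g a b j y‖) (hR.comp continuous_ofReal.continuousOn hgap) ?_
    (fun y hy ↦ norm_pos_iff.2 (hab.gapCofactor_ne_zero hj hy)) fun y hy ↦ ?_
  · unfold gapCofactor
    fun_prop
  · rw [← norm_pow, hRsq _ (hgap hy), bandPolynomial_eq_mul_gapCofactor hj, norm_mul, norm_mul,
      ← ofReal_sub, ← ofReal_sub, norm_real, norm_real,
      Real.norm_of_nonneg (sub_nonneg.2 hy.1.le), Real.norm_of_nonpos (sub_nonpos.2 hy.2.le),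
      neg_sub]

theorem isBigO_of_sq_eq_bandPolynomial
    (hRsq : ∀ z ∈ bandComplement g a b, R z ^ 2 = bandPolynomial g a b z) :
    R =O[cobounded ℂ ⊓ 𝓟 (bandComplement g a b)] fun z ↦ ‖z‖ ^ (g + 1 / 2 : ℝ) := by
  refine IsBigO.of_pow two_ne_zero ?_
  have hP := (isBigO_bandPolynomial_cobounded g a b).norm_right.mono
    (inf_le_left (b := 𝓟 (bandComplement g a b)))
  refine hP.congr' ?_ (.of_forall fun z ↦ ?_)
  · exact eventually_inf_principal.2 <| .of_forall fun z hz ↦ (hRsq z hz).symm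
  · calc ‖z ^ (2 * g + 1)‖ = ‖z‖ ^ ((2 * g + 1 : ℕ) : ℝ) := by rw [norm_pow, Real.rpow_natCast]
      _ = ‖z‖ ^ ((g + 1 / 2 : ℝ) * (2 : ℕ)) := by congr 1; push_cast; ring
      _ = (‖z‖ ^ (g + 1 / 2 : ℝ)) ^ 2 := Real.rpow_mul_natCast (norm_nonneg z) _ _

variable {φ : ℕ → ℝ → ℂ}

theorem isBigO_sum_gap_integrals (hab : IsInterlaced g a b)
    (hR : ∀ j ∈ Finset.Icc 1 g,
      IntervalIntegrable (fun ζ : ℝ ↦ (R ζ)⁻¹) volume (b j) (a (j + 1)))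
    (hφ : ∀ j ∈ Finset.Icc 1 g, ContinuousOn (φ j) (Icc (b j) (a (j + 1))))
    (hmom : ∀ k < g, ∑ j ∈ Finset.Icc 1 g,
      ∫ ζ in (b j)..(a (j + 1)), (ζ : ℂ) ^ k * (φ j ζ / R ζ) = 0) :
    (fun z ↦ ∑ j ∈ Finset.Icc 1 g, ∫ ζ in (b j)..(a (j + 1)), φ j ζ / (R ζ * (ζ - z)))
      =O[cobounded ℂ] fun z ↦ (z ^ (g + 1))⁻¹ := by
  have hle : ∀ j ∈ Finset.Icc 1 g, b j ≤ a (j + 1) := fun j hj ↦ (hab j hj).2.le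
  have hset : ∀ F : ℕ → ℝ → ℂ, ∑ j ∈ Finset.Icc 1 g, ∫ ζ in (b j)..(a (j + 1)), F j ζ =
      ∑ j ∈ Finset.Icc 1 g, ∫ ζ in Ioc (b j) (a (j + 1)), F j ζ := fun F ↦
    Finset.sum_congr rfl fun j hj ↦ intervalIntegral.integral_of_le (hle j hj)
  have hint : ∀ j ∈ Finset.Icc 1 g, IntegrableOn (fun ζ ↦ φ j ζ / R ζ) (Ioc (b j) (a (j + 1))) :=
    fun j hj ↦ (intervalIntegrable_iff_integrableOn_Ioc_of_le (hle j hj)).1 <|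
      (hR j hj).continuousOn_mul (by rw [uIcc_of_le (hle j hj)]; exact hφ j hj)
  simp only [hset] at hmom ⊢
  simp only [← div_div]
  refine isBigO_sum_integral_div_sub_of_moments_eq_zero (s := fun _ (ζ : ℝ) ↦ (ζ : ℂ))
    (A := fun j ↦ max |b j| |a (j + 1)|) (fun _ _ ↦ by fun_prop) (fun j _ ↦ ?_) hint hmom
  refine ae_restrict_of_forall_mem measurableSet_Ioc fun ζ hζ ↦ ?_
  rw [norm_real, Real.norm_eq_abs]
  exact abs_le_max_abs_abs hζ.1.le hζ.2

theorem isBigO_gapCauchyTransform (hab : IsInterlaced g a b)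
    (hR : ContinuousOn R (bandComplement g a b))
    (hRsq : ∀ z ∈ bandComplement g a b, R z ^ 2 = bandPolynomial g a b z)
    (hφ : ∀ j ∈ Finset.Icc 1 g, ContinuousOn (φ j) (Icc (b j) (a (j + 1))))
    (hmom : ∀ k < g, ∑ j ∈ Finset.Icc 1 g,
      ∫ ζ in (b j)..(a (j + 1)), (ζ : ℂ) ^ k * (φ j ζ / R ζ) = 0) :
    gapCauchyTransform g a b R φ =O[cobounded ℂ ⊓ 𝓟 (bandComplement g a b)]
      fun z ↦ ‖z‖ ^ (-(1 / 2) : ℝ) := by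
  have hprefactor : (fun z ↦ R z / (2 * Real.pi * I))
      =O[cobounded ℂ ⊓ 𝓟 (bandComplement g a b)] fun z ↦ ‖z‖ ^ (g + 1 / 2 : ℝ) :=
    ((isBigO_of_sq_eq_bandPolynomial hRsq).const_mul_left (2 * Real.pi * I)⁻¹).congr_left fun z ↦
      (div_eq_inv_mul _ _).symm
  have hsum := (isBigO_sum_gap_integrals hab
    (fun j hj ↦ hab.intervalIntegrable_inv_of_sq_eq_bandPolynomial hR hRsq hj) hφ hmom).norm_right
  refine (hprefactor.mul (hsum.mono inf_le_left)).congr' .rfl ?_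
  filter_upwards [mem_inf_of_left (eventually_ne_cobounded 0)] with z hz
  rw [norm_inv, norm_pow, ← Real.rpow_natCast, ← Real.rpow_neg (norm_nonneg z),
    ← Real.rpow_add (norm_pos_iff.2 hz)]
  congr 1
  push_cast
  ring

variable {Φ : ℕ → ℂ} {θ : ℝ → ℂ}

theorem sum_integral_pow_mul_eq_zero_of_moment_system (hab : IsInterlaced g a b)
    (hR : ∀ j ∈ Finset.Icc 1 g,
      IntervalIntegrable (fun ζ : ℝ ↦ (R ζ)⁻¹) volume (b j) (a (j + 1)))
    (hθ : ∀ j ∈ Finset.Icc 1 g, ContinuousOn θ (Icc (b j) (a (j + 1))))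
    (hmom : ∀ k ∈ Finset.Icc 1 g,
      ∑ j ∈ Finset.Icc 1 g, Φ j * ∫ ζ in (b j)..(a (j + 1)), (ζ : ℂ) ^ (k - 1) / R ζ =
        ∑ j ∈ Finset.Icc 1 g, ∫ ζ in (b j)..(a (j + 1)), 2 * θ ζ * (ζ : ℂ) ^ (k - 1) / R ζ)
    {k : ℕ} (hk : k < g) :
    ∑ j ∈ Finset.Icc 1 g,
      ∫ ζ in (b j)..(a (j + 1)), (ζ : ℂ) ^ k * ((Φ j - 2 * θ ζ) / R ζ) = 0 := by
  have hk' := hmom (k + 1) (Finset.mem_Icc.2 ⟨by lia, hk⟩)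
  rw [Nat.add_sub_cancel, ← sub_eq_zero, ← Finset.sum_sub_distrib] at hk'
  rw [← hk']
  refine Finset.sum_congr rfl fun j hj ↦ ?_
  have hint {f : ℝ → ℂ} (hf : ContinuousOn f (Icc (b j) (a (j + 1)))) :
      IntervalIntegrable (fun ζ ↦ f ζ / R ζ) volume (b j) (a (j + 1)) :=
    (hR j hj).continuousOn_mul (by rwa [uIcc_of_le (hab j hj).2.le])
  have hθj := hθ j hj
  rw [← intervalIntegral.integral_const_mul, ← intervalIntegral.integral_sub
    ((hint (by fun_prop)).const_mul _) (hint (by fun_prop))]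
  congr 1 with ζ
  ring

theorem stmt_11_general (hab : IsInterlaced g a b) (hR : ContinuousOn R (bandComplement g a b))
    (hRsq : ∀ z ∈ bandComplement g a b, R z ^ 2 = bandPolynomial g a b z)
    (hθ : ∀ j ∈ Finset.Icc 1 g, ContinuousOn θ (Icc (b j) (a (j + 1))))
    (hmom : ∀ k ∈ Finset.Icc 1 g,
      ∑ j ∈ Finset.Icc 1 g, Φ j * ∫ ζ in (b j)..(a (j + 1)), (ζ : ℂ) ^ (k - 1) / R ζ =
        ∑ j ∈ Finset.Icc 1 g, ∫ ζ in (b j)..(a (j + 1)), 2 * θ ζ * (ζ : ℂ) ^ (k - 1) / R ζ) :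
    (∃ C > 0, ∃ M, ∀ z ∈ bandComplement g a b, M ≤ ‖z‖ →
      ‖gapCauchyTransform g a b R (fun j ζ ↦ Φ j - 2 * θ ζ) z‖ ≤ C * ‖z‖ ^ (-(1 / 2) : ℝ)) ∧
    Tendsto (gapCauchyTransform g a b R fun j ζ ↦ Φ j - 2 * θ ζ)
      (cobounded ℂ ⊓ 𝓟 (bandComplement g a b)) (𝓝 0) := by
  have hinv := fun j hj ↦ hab.intervalIntegrable_inv_of_sq_eq_bandPolynomial (j := j) hR hRsq hj
  have hbigO := isBigO_gapCauchyTransform hab hR hRsq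
    (fun j hj ↦ continuousOn_const.sub (continuousOn_const.mul (hθ j hj)))
    fun k hk ↦ sum_integral_pow_mul_eq_zero_of_moment_system hab hinv hθ hmom hk
  have hdecay : Tendsto (fun z : ℂ ↦ ‖z‖ ^ (-(1 / 2) : ℝ)) (cobounded ℂ) (𝓝 0) :=
    (tendsto_rpow_neg_atTop (by norm_num)).comp tendsto_norm_cobounded_atTop
  exact ⟨exists_norm_le_mul_rpow_of_isBigO hbigO,
    hbigO.trans_tendsto (hdecay.mono_left inf_le_left)⟩

end Bands

/-- In the band/gap setting with `α₁ = 0`, fix `x, t ∈ ℝ` and let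
`(Ω₁, …, Ω_g)` solve the moment system
`∑_j Ω_j ∫_{β_j}^{α_{j+1}} ζ^{k-1}/R dζ = ∑_j ∫_{β_j}^{α_{j+1}} 2θ⁺(ζ) ζ^{k-1}/R dζ`.
Then `G(λ) = (R(λ)/(2πi)) ∑_j ∫_{β_j}^{α_{j+1}} (Ω_j - 2θ⁺(ζ))/(R(ζ)(ζ-λ)) dζ` satisfies
`G(λ) = O(|λ|^{-1/2})` as `λ → ∞` in `ℂ ∖ [0, ∞)`; in particular `G(λ) → 0`. -/
theorem stmt_11
    (g : ℕ) (hg : 1 ≤ g) (a b : ℕ → ℝ)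
    (ha1 : a 1 = 0)
    (hord : ∀ j ∈ Finset.Icc 1 g, a j < b j ∧ b j < a (j + 1))
    (P : ℂ → ℂ)
    (hP : ∀ z : ℂ, P z = (z - (a (g + 1) : ℂ)) *
      ∏ j ∈ Finset.Icc 1 g, ((z - (a j : ℂ)) * (z - (b j : ℂ))))
    (σB : Set ℝ)
    (hσB : σB = Set.Ici (a (g + 1)) ∪ ⋃ j ∈ Finset.Icc 1 g, Set.Icc (a j) (b j))
    (Ω : Set ℂ) (hΩ : Ω = {z : ℂ | ¬(z.im = 0 ∧ z.re ∈ σB)})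
    (R : ℂ → ℂ)
    (hRanal : DifferentiableOn ℂ R Ω)
    (hRsq : ∀ z ∈ Ω, R z ^ 2 = P z)
    (hRasym : Tendsto (fun x : ℝ => R (x : ℂ) / (((|x| ^ ((g : ℝ) + 1/2) : ℝ)) : ℂ))
      atBot (nhds ((-1 : ℂ) ^ g * Complex.I)))
    (hRgap : ∀ j ∈ Finset.Icc 1 g, ∀ x ∈ Set.Ioo (b j) (a (j + 1)),
      (R (x : ℂ)).re = 0 ∧ R (x : ℂ) ≠ 0)
    (x t : ℝ)
    (θp : ℝ → ℝ) (hθp : ∀ ζ : ℝ, θp ζ = Real.sqrt ζ * (x + 4 * ζ * t))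
    (Ωv : ℕ → ℝ)
    (hΩv : ∀ k ∈ Finset.Icc 1 g,
      ∑ j ∈ Finset.Icc 1 g, (Ωv j : ℂ) *
          ∫ ζ in (b j)..(a (j + 1)), (ζ : ℂ) ^ (k - 1) / R (ζ : ℂ)
        = ∑ j ∈ Finset.Icc 1 g,
          ∫ ζ in (b j)..(a (j + 1)), 2 * (θp ζ : ℂ) * (ζ : ℂ) ^ (k - 1) / R (ζ : ℂ))
    (G : ℂ → ℂ)
    (hG : ∀ z : ℂ, G z = (R z / (2 * Real.pi * Complex.I)) *
      ∑ j ∈ Finset.Icc 1 g,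
        ∫ ζ in (b j)..(a (j + 1)),
          ((Ωv j : ℂ) - 2 * (θp ζ : ℂ)) / (R (ζ : ℂ) * ((ζ : ℂ) - z))) :
    (∃ C > (0:ℝ), ∃ M : ℝ, ∀ z : ℂ, ¬(z.im = 0 ∧ 0 ≤ z.re) → M ≤ ‖z‖ →
      ‖G z‖ ≤ C * ‖z‖ ^ (-(1/2 : ℝ))) ∧
    Tendsto G (Filter.comap (fun z : ℂ => ‖z‖) atTop ⊓
      Filter.principal {z : ℂ | ¬(z.im = 0 ∧ 0 ≤ z.re)}) (nhds 0) := by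
  have hθ : Continuous fun ζ ↦ (θp ζ : ℂ) := by
    simp only [hθp]
    fun_prop
  obtain rfl : G = gapCauchyTransform g a b R fun j ζ ↦ Ωv j - 2 * θp ζ := funext hG
  subst hΩ hσB
  have hsub : {z : ℂ | ¬(z.im = 0 ∧ 0 ≤ z.re)} ⊆ bandComplement g a b :=
    ha1 ▸ IsInterlaced.compl_Ici_subset_bandComplement hord
  obtain ⟨⟨C, hC, M, hbound⟩, hlim⟩ := stmt_11_general hord hRanal.continuousOn
    (fun z hz ↦ (hRsq z hz).trans (hP z)) (fun _ _ ↦ hθ.continuousOn) hΩv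
  rw [comap_norm_atTop]
  exact ⟨⟨C, hC, M, fun z hz ↦ hbound z (hsub hz)⟩,
    hlim.mono_left (inf_le_inf_left _ (principal_mono.2 hsub))⟩
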